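/- arXiv:2302.09647 — 13 statements merged into one kernel-verified Lean document; each statement's English description precedes it below -/
import Mathlib

section
/- Let S ≠ ℕ be a numerical semigroup with genus g = g(S) and type t = t(S). Then 2^t ≤ |I₀(S)| ≤ 2^g − 2^(g−t) + 1. -/
/-!
An ideal `E` of `S` with minimum `0` contains `S`, so it is `S ∪ B` for a unique set `B` of gaps.
If `B` consists of pseudo-Frobenius numbers, then `S ∪ B` is always an ideal, which gives the lower
bound. If `B` is a nonempty set of gaps none of which is pseudo-Frobenius, then `S ∪ B` is never an
ideal: some nonzero `s ∈ S` moves `max B` to a gap larger than every element of `B`. There are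
`2 ^ (g - t) - 1` such sets `B`, and removing them from the `2 ^ g` sets of gaps gives the upper
bound.
-/

open Set Pointwise

/-- A numerical semigroup: a subset of ℕ containing 0, closed under addition,
with finite complement. -/
def IsNumSgp (S : Set ℕ) : Prop :=
  0 ∈ S ∧ (∀ a ∈ S, ∀ b ∈ S, a + b ∈ S) ∧ Sᶜ.Finite

/-- The set of ideals of `S` whose smallest element is 0. -/
def I0 (S : Set ℕ) : Set (Set ℕ) :=
  {E | 0 ∈ E ∧ E + S ⊆ E}

/-- The genus of `S`: the number of gaps. -/
noncomputable def genus (S : Set ℕ) : ℕ := Sᶜ.ncard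

/-- Pseudo-Frobenius numbers of `S`. -/
def PFset (S : Set ℕ) : Set ℕ :=
  {f | f ∉ S ∧ ∀ s ∈ S, s ≠ 0 → f + s ∈ S}

/-- The type of `S`. -/
noncomputable def typeNS (S : Set ℕ) : ℕ := (PFset S).ncard

/-- The multiplicity of `S`: its least nonzero element. -/
noncomputable def mult (S : Set ℕ) : ℕ := sInf {n | n ∈ S ∧ n ≠ 0}

/-- `wElt E m i` is the least element of `E` congruent to `i` modulo `m`. -/
noncomputable def wElt (E : Set ℕ) (m i : ℕ) : ℕ := sInf {e | e ∈ E ∧ e % m = i % m}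

/-- The Frobenius number of `S`: the largest gap. -/
noncomputable def FrobN (S : Set ℕ) : ℕ := sSup Sᶜ

theorem injOn_union_gaps (S : Set ℕ) : Set.InjOn (fun B => S ∪ B) (𝒫 Sᶜ) := by
  intro A hA B hB h
  ext x
  have hx : x ∈ S ∪ A ↔ x ∈ S ∪ B := by rw [show S ∪ A = S ∪ B from h]
  have h1 : x ∈ A → x ∉ S := fun h => hA h
  have h2 : x ∈ B → x ∉ S := fun h => hB h
  simp only [Set.mem_union] at hx
  tauto

theorem PFset_subset (S : Set ℕ) : PFset S ⊆ Sᶜ := fun _ h => h.1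

theorem union_mem_I0 {S : Set ℕ} (hS : IsNumSgp S) {B : Set ℕ} (hB : B ⊆ PFset S) :
    S ∪ B ∈ I0 S := by
  refine ⟨Or.inl hS.1, ?_⟩
  rintro _ ⟨a, ha | ha, s, hs, rfl⟩
  · exact Or.inl (hS.2.1 a ha s hs)
  · rcases eq_or_ne s 0 with rfl | h0
    · exact Or.inr (by simpa using ha)
    · exact Or.inl ((hB ha).2 s hs h0)

theorem union_notMem_I0 {S : Set ℕ} (hS : IsNumSgp S) {B : Set ℕ} (hB : B ⊆ Sᶜ \ PFset S)
    (hne : B.Nonempty) : S ∪ B ∉ I0 S := by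
  intro hI
  have hfin : B.Finite := hS.2.2.subset fun x hx => (hB hx).1
  -- The largest element `b` of `B` is chosen so that any gap `b + s` with `s ≠ 0` lies outside `B`.
  obtain ⟨b, hb, hmax⟩ := Set.exists_max_image B id hfin hne
  obtain ⟨hbS, hbPF⟩ := hB hb
  have hex : ∃ s ∈ S, s ≠ 0 ∧ b + s ∉ S := by
    by_contra! h
    exact hbPF ⟨hbS, h⟩
  obtain ⟨s, hs, h0, hgap⟩ := hex
  rcases hI.2 (Set.add_mem_add (Or.inr hb) hs) with h | h
  · exact hgap h
  · have := hmax _ h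
    simp only [id] at this
    omega

/-- Every ideal is `S ∪ B` for its set of gaps `B`, and `B` avoids the excluded family: the nonempty
sets of gaps without pseudo-Frobenius numbers. -/
theorem I0_subset_image {S : Set ℕ} (hS : IsNumSgp S) :
    I0 S ⊆ (fun B => S ∪ B) '' (𝒫 Sᶜ \ (𝒫 (Sᶜ \ PFset S) \ {∅})) := by
  intro E hE
  have hSE : S ⊆ E := fun s hs => by simpa using hE.2 (Set.add_mem_add hE.1 hs)
  have hU : S ∪ E \ S = E := Set.union_sdiff_cancel hSE
  refine ⟨E \ S, ⟨fun x hx => hx.2, ?_⟩, hU⟩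
  rintro ⟨h1, h2⟩
  exact union_notMem_I0 hS h1 (Set.nonempty_iff_ne_empty.mpr h2) (hU.symm ▸ hE)

theorem stmt_0 (S : Set ℕ) (hS : IsNumSgp S) (hne : S ≠ Set.univ) :
    2 ^ typeNS S ≤ (I0 S).ncard ∧
      (I0 S).ncard ≤ 2 ^ genus S - 2 ^ (genus S - typeNS S) + 1 := by
  have hG : Sᶜ.Finite := hS.2.2
  have hP : (PFset S).Finite := hG.subset (PFset_subset S)
  have hfin := hG.powerset
  have hfin' := (hfin.subset (Set.sdiff_subset (t := 𝒫 (Sᶜ \ PFset S) \ {∅}))).image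
    (fun B => S ∪ B)
  constructor
  · rw [typeNS, ← Set.ncard_powerset _ hP, ← Set.ncard_image_of_injOn
      ((injOn_union_gaps S).mono (Set.powerset_mono.mpr (PFset_subset S)))]
    refine Set.ncard_le_ncard ?_ (hfin'.subset (I0_subset_image hS))
    rintro _ ⟨B, hB, rfl⟩
    exact union_mem_I0 hS hB
  · have hD : (Sᶜ \ PFset S).ncard = genus S - typeNS S :=
      Set.ncard_sdiff (PFset_subset S) hP
    have hsub : 𝒫 (Sᶜ \ PFset S) \ {∅} ⊆ 𝒫 Sᶜ :=
      Set.sdiff_subset.trans (Set.powerset_mono.mpr Set.sdiff_subset)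
    have hle := Set.ncard_le_ncard (I0_subset_image hS) hfin'
    rw [Set.ncard_image_of_injOn ((injOn_union_gaps S).mono Set.sdiff_subset),
      Set.ncard_sdiff hsub (hfin.subset hsub), Set.ncard_powerset _ hG,
      Set.ncard_sdiff_singleton_of_mem (Set.empty_subset _),
      Set.ncard_powerset _ (hG.subset Set.sdiff_subset), hD] at hle
    have h1 : 1 ≤ 2 ^ (genus S - typeNS S) := Nat.one_le_two_pow
    have h2 : 2 ^ (genus S - typeNS S) ≤ 2 ^ genus S :=
      Nat.pow_le_pow_right (by norm_num) (Nat.sub_le _ _)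
    rw [← genus] at hle
    omega
end

section
/- Let S be a numerical semigroup with multiplicity m ≥ 3, genus g = g(S) and type t = t(S). Then |I₀(S)| = 2^g − 2^(g−t) + 1 if and only if S = {0} ∪ {n ∈ ℕ : n ≥ m} or S = ℕ \ ({1, …, m−1} ∪ {2m−1}) (the latter is the numerical semigroup generated by m, m+1, …, 2m−2). -/
/-!
An ideal `E ∈ I0 S` contains `S`, and if `E ≠ S` then the largest element of the finite set `E \ S`
is pseudo-Frobenius. Hence `I0 S` lies in the family `candidates S` consisting of `S` and of all
supersets of `S` meeting `PFset S`, and that family has exactly `2 ^ g - 2 ^ (g - t) + 1` members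
(`ncard_candidates`). So the equality of cardinalities holds iff every candidate is an ideal.

Suppose every candidate is an ideal. If all gaps are pseudo-Frobenius, no gap exceeds `m`, for
otherwise `x - m` would be a gap that is not pseudo-Frobenius; so `S = {0} ∪ [m, ∞)`. Otherwise,
applying the hypothesis to `S ∪ {x, f}` with `x` a gap that is not pseudo-Frobenius and `f`
pseudo-Frobenius forces `x + s = f` whenever `0 ≠ s ∈ S` and `x + s ∉ S`. Thus `PFset S = {f}`,
`f` is the only gap beyond `m`, and `f - x ∈ S` for each `x < m`; this pins down `f = 2 m - 1`.
Conversely, for the two semigroups of the statement it is immediate that candidates are ideals.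
-/

open Set Pointwise

/-- `S` together with the supersets of `S` that contain a pseudo-Frobenius number of `S`. -/
def candidates (S : Set ℕ) : Set (Set ℕ) :=
  insert S {E | S ⊆ E ∧ ∃ f ∈ PFset S, f ∈ E}

lemma ncard_Icc_set {P Q : Set ℕ} (h : P ⊆ Q) (hf : (Q \ P).Finite) :
    (Set.Icc P Q).ncard = 2 ^ (Q \ P).ncard ∧ (Set.Icc P Q).Finite := by
  have himg : Set.Icc P Q = (fun X => P ∪ X) '' (𝒫 (Q \ P)) := by
    ext E
    constructor
    · rintro ⟨h1, h2⟩
      exact ⟨E \ P, Set.sdiff_subset_sdiff_left h2, Set.union_sdiff_cancel h1⟩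
    · rintro ⟨X, hX, rfl⟩
      exact ⟨Set.subset_union_left, Set.union_subset h (hX.trans Set.sdiff_subset)⟩
  have hinj : Set.InjOn (fun X => P ∪ X) (𝒫 (Q \ P)) := by
    intro X hX Y hY hXY
    ext z
    have hz := Set.ext_iff.mp hXY z
    have h1 := @hX z
    have h2 := @hY z
    simp only [Set.mem_union, Set.mem_sdiff] at hz h1 h2
    tauto
  rw [himg]
  exact ⟨by rw [hinj.ncard_image, Set.ncard_powerset _ hf],
    hf.finite_subsets.image _⟩

lemma ncard_candidates {S : Set ℕ} (hS : IsNumSgp S) :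
    (candidates S).ncard = 2 ^ genus S - 2 ^ (genus S - typeNS S) + 1 ∧
      (candidates S).Finite := by
  have hPF : PFset S ⊆ Sᶜ := fun f hf => hf.1
  have hSPF : S ⊆ (PFset S)ᶜ := Set.subset_compl_comm.mp hPF
  have hd : (PFset S)ᶜ \ S = Sᶜ \ PFset S := by
    ext; simp only [Set.mem_sdiff, Set.mem_compl_iff]; tauto
  have hu : Set.univ \ S = Sᶜ := by ext; simp
  -- The supersets of `S` meeting `PFset S` are all supersets minus those inside `(PFset S)ᶜ`.
  have heq : {E | S ⊆ E ∧ ∃ f ∈ PFset S, f ∈ E} =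
      Set.Icc S Set.univ \ Set.Icc S (PFset S)ᶜ := by
    ext E
    simp only [Set.mem_ofPred_eq, Set.mem_sdiff, Set.mem_Icc, Set.subset_univ,
      and_true]
    refine and_congr_right fun h => ?_
    simp only [h, true_and, Set.subset_compl_comm (s := E), Set.not_subset, Set.mem_compl_iff,
      not_not]
  obtain ⟨c1, f1⟩ := ncard_Icc_set (Set.subset_univ S) (by rw [hu]; exact hS.2.2)
  obtain ⟨c2, f2⟩ := ncard_Icc_set hSPF (by rw [hd]; exact hS.2.2.sdiff)
  have hfin : {E | S ⊆ E ∧ ∃ f ∈ PFset S, f ∈ E}.Finite := heq ▸ f1.sdiff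
  have hSn : S ∉ {E | S ⊆ E ∧ ∃ f ∈ PFset S, f ∈ E} := fun ⟨_, f, hf, hfS⟩ => hf.1 hfS
  refine ⟨?_, hfin.insert _⟩
  rw [candidates, Set.ncard_insert_of_notMem hSn hfin, heq,
    Set.ncard_sdiff (Set.Icc_subset_Icc_right (Set.subset_univ _)) f2, c1, c2, hu, hd,
    Set.ncard_sdiff hPF (hS.2.2.subset hPF), genus, typeNS]

/-- The largest element of `E \ S` is pseudo-Frobenius, for every ideal `E ≠ S`. -/
lemma I0_subset_candidates {S : Set ℕ} (hS : IsNumSgp S) : I0 S ⊆ candidates S := by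
  rintro E ⟨h0, hE⟩
  have hSE : S ⊆ E := fun s hs => by simpa using hE (Set.add_mem_add h0 hs)
  by_cases hne : E = S
  · exact Or.inl hne
  right
  have hn : (E \ S).Nonempty := by
    rw [Set.sdiff_nonempty]
    exact fun h => hne (h.antisymm hSE)
  have hfin : (E \ S).Finite := hS.2.2.subset fun x hx => hx.2
  obtain ⟨f, hf, hmax⟩ := hfin.exists_maximalFor id _ hn
  refine ⟨hSE, f, ⟨hf.2, fun s hs hs0 => ?_⟩, hf.1⟩
  by_contra hcon
  have := hmax (j := f + s) ⟨hE (Set.add_mem_add hf.1 hs), hcon⟩ (by simp)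
  simp only [id] at this
  omega

/-- As `I0 S ⊆ candidates S` are finite, the cardinalities agree iff every candidate is an ideal;
the candidate `S` always is one. -/
lemma card_eq_iff {S : Set ℕ} (hS : IsNumSgp S) :
    (I0 S).ncard = 2 ^ genus S - 2 ^ (genus S - typeNS S) + 1 ↔
      ∀ E, S ⊆ E → (∃ f ∈ PFset S, f ∈ E) → E + S ⊆ E := by
  obtain ⟨hc, hfin⟩ := ncard_candidates hS
  rw [← hc]
  constructor
  · intro h E hSE hf
    have := Set.eq_of_subset_of_ncard_le (I0_subset_candidates hS) h.ge hfin
    have hE : E ∈ I0 S := this ▸ Or.inr ⟨hSE, hf⟩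
    exact hE.2
  · intro h
    congr 1
    refine (I0_subset_candidates hS).antisymm ?_
    rintro E (rfl | ⟨hSE, hf⟩)
    · exact ⟨hS.1, Set.add_subset_iff.mpr hS.2.1⟩
    · exact ⟨hSE hS.1, h E hSE hf⟩

theorem stmt_1 (S : Set ℕ) (hS : IsNumSgp S) (hm : 3 ≤ mult S) :
    (I0 S).ncard = 2 ^ genus S - 2 ^ (genus S - typeNS S) + 1 ↔
      (S = {n : ℕ | n = 0 ∨ mult S ≤ n} ∨
        S = {n : ℕ | (n = 0 ∨ mult S ≤ n) ∧ n ≠ 2 * mult S - 1}) := by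
  rw [card_eq_iff hS]
  have hmin : ∀ n ∈ S, n ≠ 0 → mult S ≤ n := fun n h h0 => Nat.sInf_le ⟨h, h0⟩
  -- `sInf ∅ = 0`, so a positive multiplicity is attained.
  have hmS : mult S ∈ S := by
    have hne : {n | n ∈ S ∧ n ≠ 0}.Nonempty := Nat.nonempty_of_pos_sInf (by
      change 0 < mult S
      omega)
    exact (Nat.sInf_mem hne).1
  generalize mult S = m at *
  constructor
  · intro h
    by_cases hall : ∀ x, x ∉ S → x ∈ PFset S
    · left
      ext n
      refine ⟨fun hn => or_iff_not_imp_left.mpr (hmin n hn), ?_⟩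
      rintro (rfl | hn)
      · exact hS.1
      · by_contra hnS
        by_cases hd : n - m ∈ S
        · exact hnS (by simpa [Nat.sub_add_cancel hn] using hS.2.1 _ hd _ hmS)
        · exact hnS (by simpa [Nat.sub_add_cancel hn] using (hall _ hd).2 m hmS (by omega))
    · right
      push Not at hall
      obtain ⟨x₀, hx₀, hx₀P⟩ := hall
      -- If `0 ≠ s ∈ S` and `x + s ∉ S`, the ideal `S ∪ {x, f}` contains `x + s`, so `x + s = f`.
      have key : ∀ x f s, f ∈ PFset S → s ∈ S → s ≠ 0 → x + s ∉ S → x + s = f := by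
        intro x f s hf hs hs0 hxs
        have := h (S ∪ {x, f}) Set.subset_union_left ⟨f, hf, by simp⟩
          (Set.add_mem_add (a := x) (by simp) hs)
        simp only [Set.mem_union, Set.mem_insert_iff, Set.mem_singleton_iff] at this
        rcases this with h | h | h
        · exact absurd h hxs
        · omega
        · exact h
      have hexists : ∀ x, x ∉ S → x ∉ PFset S → ∃ s ∈ S, s ≠ 0 ∧ x + s ∉ S := by
        intro x hx hxP
        by_contra! hcon
        exact hxP ⟨hx, hcon⟩
      -- The ideal `ℕ` differs from `S`, so a pseudo-Frobenius number exists.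
      obtain ⟨f, hf⟩ : ∃ f, f ∈ PFset S := by
        rcases I0_subset_candidates hS (show Set.univ ∈ I0 S from ⟨trivial, Set.subset_univ _⟩)
          with h | ⟨_, f, hf, _⟩
        · exact absurd (h ▸ Set.mem_univ x₀) hx₀
        · exact ⟨f, hf⟩
      obtain ⟨s₀, hs₀, hs₀0, hxs₀⟩ := hexists x₀ hx₀ hx₀P
      have huniq : ∀ f' ∈ PFset S, f' = f := fun f' hf' =>
        (key x₀ f' s₀ hf' hs₀ hs₀0 hxs₀).symm.trans (key x₀ f s₀ hf hs₀ hs₀0 hxs₀)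
      have hfm : m < f := by
        have h1 := key x₀ f s₀ hf hs₀ hs₀0 hxs₀
        have h2 := hmin s₀ hs₀ hs₀0
        have h3 : x₀ ≠ 0 := fun h => hx₀ (h ▸ hS.1)
        omega
      have hbig : ∀ x, x ∉ S → m ≤ x → x = f := by
        intro x hx hmx
        have hxe : x - m + m = x := Nat.sub_add_cancel hmx
        have := key (x - m) f m hf hmS (by omega) (by rwa [hxe])
        omega
      have hlt : f < 2 * m := by
        by_contra hcon
        have hfe : f - m + m = f := Nat.sub_add_cancel hfm.le
        have hg : f - m ∉ S := fun hs => hf.1 (hfe ▸ hS.2.1 _ hs _ hmS)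
        have := hbig (f - m) hg (by omega)
        omega
      -- The gap `m - 1` lies below `f` in the order induced by `S`, whence `f - (m - 1) ≥ m`.
      have hge : 2 * m - 1 ≤ f := by
        have hg : m - 1 ∉ S := fun hs => by
          have := hmin _ hs (by omega)
          omega
        have hgP : m - 1 ∉ PFset S := fun hP => by
          have := huniq _ hP
          omega
        obtain ⟨s, hs, hs0, hxs⟩ := hexists _ hg hgP
        have h1 := key _ f s hf hs hs0 hxs
        have h2 := hmin s hs hs0
        omega
      have hfe : f = 2 * m - 1 := by omega
      ext n
      constructor
      · intro hn
        exact ⟨or_iff_not_imp_left.mpr (hmin n hn), fun hne => hf.1 (hfe ▸ hne ▸ hn)⟩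
      · rintro ⟨rfl | hn, hne⟩
        · exact hS.1
        · by_contra hnS
          exact hne ((hbig n hnS hn).trans hfe)
  · rintro (h | h) E hSE ⟨f, hf, hfE⟩
    · rw [Set.add_subset_iff]
      intro e he s hs
      by_cases hs0 : s = 0
      · simpa [hs0] using he
      · apply hSE
        have := hmin s hs hs0
        rw [h]
        right
        omega
    · have hmem : ∀ n, n ∈ S ↔ (n = 0 ∨ m ≤ n) ∧ n ≠ 2 * m - 1 := Set.ext_iff.mp h
      -- A gap `f < m` satisfies `f + (2 m - 1 - f) ∉ S`, so `2 m - 1` is the only possibility.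
      have hfe : f = 2 * m - 1 := by
        by_contra hne
        have hfS := hf.1
        rw [hmem] at hfS
        have h1 := hf.2 (2 * m - 1 - f) ((hmem _).mpr (by omega)) (by omega)
        rw [hmem] at h1
        omega
      rw [Set.add_subset_iff]
      intro e he s hs
      by_cases hs0 : s = 0
      · simpa [hs0] using he
      · have := hmin s hs hs0
        by_cases hes : e + s = 2 * m - 1
        · rw [hes, ← hfe]
          exact hfE
        · exact hSE ((hmem _).mpr (by omega))
end

section
/- Let S be a numerical semigroup with multiplicity m = m(S) and genus g = g(S). Then 2^(m−1) + g − m + 1 ≤ |I₀(S)|. -/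
/-!
Let `m` be the multiplicity. Every nonzero element of `S` is at least `m`, so for each
`A ⊆ {1, …, m - 1}` the set `{0} ∪ A ∪ [m, ∞)` is an ideal with minimum `0`; this gives `2 ^ (m - 1)`
ideals, all containing `[m, ∞)`. For each of the `g - (m - 1)` gaps `f ≥ m`, the set `S ∪ (f, ∞)` is
also an ideal with minimum `0`. It omits `f`, so it is not in the first family, and `f` is the
largest number it omits, so distinct gaps give distinct ideals.
-/

open Set Pointwise

/-- The set `{0} ∪ A ∪ [m, ∞)`. -/
def lowIdeal (m : ℕ) (A : Finset ℕ) : Set ℕ := {x | x = 0 ∨ x ∈ A ∨ m ≤ x}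

/-- The set `S ∪ (f, ∞)`. -/
def tailIdeal (S : Set ℕ) (f : ℕ) : Set ℕ := {x | x ∈ S ∨ f < x}

lemma finite_I0 {S : Set ℕ} (hS : IsNumSgp S) : (I0 S).Finite := by
  refine Set.Finite.of_finite_image (f := fun E : Set ℕ => Eᶜ) ?_ compl_injective.injOn
  refine hS.2.2.finite_subsets.subset ?_
  rintro _ ⟨E, ⟨h0, hE⟩, rfl⟩
  refine Set.compl_subset_compl.2 fun s hs => ?_
  simpa using hE (Set.add_mem_add h0 hs)

lemma mult_spec {S : Set ℕ} (hS : IsNumSgp S) : mult S ∈ S ∧ mult S ≠ 0 := by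
  refine Nat.sInf_mem (s := {n | n ∈ S ∧ n ≠ 0}) ?_
  obtain ⟨n, hn⟩ := (hS.2.2.union (Set.finite_singleton 0)).exists_notMem
  simp only [Set.mem_union, Set.mem_compl_iff, Set.mem_singleton_iff, not_or, not_not] at hn
  exact ⟨n, hn⟩

lemma mult_le {S : Set ℕ} {s : ℕ} (hs : s ∈ S) (h0 : s ≠ 0) : mult S ≤ s :=
  Nat.sInf_le ⟨hs, h0⟩

lemma lowIdeal_mem {S : Set ℕ} (A : Finset ℕ) : lowIdeal (mult S) A ∈ I0 S := by
  refine ⟨Or.inl rfl, ?_⟩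
  rintro _ ⟨a, ha, s, hs, rfl⟩
  rcases eq_or_ne s 0 with rfl | h0
  · simpa using ha
  · exact Or.inr (Or.inr ((mult_le hs h0).trans (Nat.le_add_left _ _)))

lemma tailIdeal_mem {S : Set ℕ} (hS : IsNumSgp S) (f : ℕ) : tailIdeal S f ∈ I0 S := by
  refine ⟨Or.inl hS.1, ?_⟩
  rintro _ ⟨a, ha | ha, s, hs, rfl⟩
  · exact Or.inl (hS.2.1 a ha s hs)
  · exact Or.inr (ha.trans_le (Nat.le_add_right _ _))

lemma lowIdeal_injOn (m : ℕ) :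
    Set.InjOn (lowIdeal m) ((Finset.Ico 1 m).powerset : Set (Finset ℕ)) := by
  have key : ∀ A ∈ (Finset.Ico 1 m).powerset, ∀ x,
      x ∈ A ↔ x ∈ lowIdeal m A ∧ 1 ≤ x ∧ x < m := by
    intro A hA x
    have hx : x ∈ A → 1 ≤ x ∧ x < m := fun h => Finset.mem_Ico.1 (Finset.mem_powerset.1 hA h)
    refine ⟨fun h => ⟨Or.inr (Or.inl h), hx h⟩, ?_⟩
    rintro ⟨h | h | h, h1, h2⟩
    · omega
    · exact h
    · omega
  intro A hA B hB hAB
  ext x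
  rw [key A hA, key B hB, hAB]

lemma tailIdeal_injOn (S : Set ℕ) : Set.InjOn (tailIdeal S) Sᶜ := by
  have key : ∀ f ∈ Sᶜ, ∀ g ∈ Sᶜ, tailIdeal S f = tailIdeal S g → g ≤ f := by
    intro f _ g hg h
    by_contra! hlt
    have hmem : g ∈ tailIdeal S g := h ▸ (Or.inr hlt : g ∈ tailIdeal S f)
    exact hmem.elim hg (lt_irrefl g)
  intro f hf g hg h
  exact le_antisymm (key g hg f hf h.symm) (key f hf g hg h)

theorem stmt_2 (S : Set ℕ) (hS : IsNumSgp S) :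
    2 ^ (mult S - 1) + genus S - mult S + 1 ≤ (I0 S).ncard := by
  have hm := (mult_spec hS).2
  set L : Set (Set ℕ) := lowIdeal (mult S) '' ((Finset.Ico 1 (mult S)).powerset : Set (Finset ℕ))
    with hL
  set G : Set ℕ := Sᶜ \ (Finset.Ico 1 (mult S) : Set ℕ) with hG
  have hLcard : L.ncard = 2 ^ (mult S - 1) := by
    rw [hL, (lowIdeal_injOn _).ncard_image, Set.ncard_coe_finset,
      Finset.card_powerset, Nat.card_Ico]
  have hsub : (Finset.Ico 1 (mult S) : Set ℕ) ⊆ Sᶜ := by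
    intro x hx hxS
    have hx' := Finset.mem_Ico.1 (Finset.mem_coe.1 hx)
    have := mult_le hxS (by omega)
    omega
  have hGcard : G.ncard + (mult S - 1) = genus S := by
    have h := Set.ncard_sdiff_add_ncard_of_subset hsub hS.2.2
    rwa [Set.ncard_coe_finset, Nat.card_Ico] at h
  have hTcard : (tailIdeal S '' G).ncard = G.ncard :=
    Set.InjOn.ncard_image ((tailIdeal_injOn S).mono Set.sdiff_subset)
  have hdisj : Disjoint L (tailIdeal S '' G) := by
    rw [Set.disjoint_left]
    rintro _ ⟨A, -, rfl⟩ ⟨f, ⟨hfS, hf⟩, h⟩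
    have hf0 : f ≠ 0 := fun h0 => hfS (h0 ▸ hS.1)
    have hmf : mult S ≤ f := by
      by_contra! hlt
      exact hf (Finset.mem_coe.2 (Finset.mem_Ico.2 ⟨Nat.pos_of_ne_zero hf0, hlt⟩))
    have hmem : f ∈ tailIdeal S f := h ▸ (Or.inr (Or.inr hmf) : f ∈ lowIdeal (mult S) A)
    exact hmem.elim hfS (lt_irrefl f)
  have hunion : L ∪ tailIdeal S '' G ⊆ I0 S := by
    rintro _ (⟨A, -, rfl⟩ | ⟨f, -, rfl⟩)
    · exact lowIdeal_mem A
    · exact tailIdeal_mem hS f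
  have hfin := finite_I0 hS
  have hle := Set.ncard_le_ncard hunion hfin
  rw [Set.ncard_union_eq hdisj (hfin.subset (Set.subset_union_left.trans hunion))
    (hfin.subset (Set.subset_union_right.trans hunion)), hLcard, hTcard] at hle
  have hpos : 1 ≤ 2 ^ (mult S - 1) := Nat.one_le_two_pow
  -- Since `mult S - 1 ≤ genus S` and the power is positive, no subtraction truncates.
  omega
end

section
/- Let S be a numerical semigroup. The cardinality of I₀(S) equals the number of subsets X of G(S) that are antichains with respect to ≤_S, i.e., such that for any two distinct a, b ∈ X neither a ≤_S b nor b ≤_S a (the empty set counts as an antichain). -/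
/-!
An ideal `E` of `S` with minimum `0` contains `S`, so it is determined by its gaps `E \ S`, and
these are determined by their `≤_S`-minimal elements, which form an antichain: since `≤_S` refines
the usual order of `ℕ`, every gap in `E` lies above a minimal one (`exists_minGaps_leS`).
Conversely an antichain `X` of gaps generates the ideal `({0} ∪ X) + S`, whose minimal gaps are
exactly `X`. The maps `minGaps S` and `genIdeal S` are thus mutually inverse bijections.
-/


open Set Pointwise

/-- The order induced by `S` on ℕ: `a ≤_S b` iff `b = a + s` for some `s ∈ S`. -/
def leS (S : Set ℕ) (a b : ℕ) : Prop := ∃ s ∈ S, b = a + s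


/-- The `≤_S`-minimal elements of the set of gaps of `S` lying in `E`. -/
def minGaps (S E : Set ℕ) : Set ℕ :=
  {x | x ∈ E ∧ x ∉ S ∧ ∀ y ∈ E, y ∉ S → leS S y x → y = x}

/-- The ideal of `S` generated by `0` and `X`. -/
def genIdeal (S X : Set ℕ) : Set ℕ := insert 0 X + S

lemma mem_genIdeal {S X : Set ℕ} {n : ℕ} :
    n ∈ genIdeal S X ↔ n ∈ S ∨ ∃ x ∈ X, leS S x n := by
  simp only [genIdeal, Set.mem_add, Set.mem_insert_iff, leS]
  constructor
  · rintro ⟨x, rfl | hx, s, hs, rfl⟩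
    · left; simpa using hs
    · exact Or.inr ⟨x, hx, s, hs, rfl⟩
  · rintro (h | ⟨x, hx, s, hs, rfl⟩)
    · exact ⟨0, Or.inl rfl, n, h, by simp⟩
    · exact ⟨x, Or.inr hx, s, hs, rfl⟩

lemma leS_trans {S : Set ℕ} (hS : IsNumSgp S) {a b c : ℕ} (hab : leS S a b) (hbc : leS S b c) :
    leS S a c := by
  obtain ⟨s, hs, rfl⟩ := hab
  obtain ⟨t, ht, rfl⟩ := hbc
  exact ⟨s + t, hS.2.1 s hs t ht, by omega⟩

lemma leS_refl {S : Set ℕ} (hS : IsNumSgp S) (a : ℕ) : leS S a a := ⟨0, hS.1, by simp⟩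

lemma genIdeal_mem_I0 {S : Set ℕ} (hS : IsNumSgp S) (X : Set ℕ) : genIdeal S X ∈ I0 S := by
  refine ⟨mem_genIdeal.2 (Or.inl hS.1), ?_⟩
  rintro _ ⟨a, ha, s, hs, rfl⟩
  rcases mem_genIdeal.1 ha with h | ⟨x, hx, h⟩
  · exact mem_genIdeal.2 (Or.inl (hS.2.1 a h s hs))
  · exact mem_genIdeal.2 (Or.inr ⟨x, hx, leS_trans hS h ⟨s, hs, rfl⟩⟩)

lemma exists_minGaps_leS {S : Set ℕ} (hS : IsNumSgp S) (E : Set ℕ) (n : ℕ) (hE : n ∈ E)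
    (hn : n ∉ S) : ∃ x ∈ minGaps S E, leS S x n := by
  induction n using Nat.strong_induction_on with
  | _ n ih =>
    by_cases h : n ∈ minGaps S E
    · exact ⟨n, h, leS_refl hS n⟩
    · have : ∃ y ∈ E, y ∉ S ∧ leS S y n ∧ y ≠ n := by
        by_contra! hc
        exact h ⟨hE, hn, hc⟩
      obtain ⟨y, hyE, hyS, hyn, hne⟩ := this
      have hlt : y < n := by
        obtain ⟨s, -, rfl⟩ := hyn
        omega
      obtain ⟨x, hx, hxy⟩ := ih y hlt hyE hyS
      exact ⟨x, hx, leS_trans hS hxy hyn⟩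

lemma genIdeal_minGaps {S E : Set ℕ} (hS : IsNumSgp S) (hE : E ∈ I0 S) :
    genIdeal S (minGaps S E) = E := by
  ext n
  rw [mem_genIdeal]
  constructor
  · rintro (h | ⟨x, hx, s, hs, rfl⟩)
    · simpa using hE.2 (Set.add_mem_add hE.1 h)
    · exact hE.2 (Set.add_mem_add hx.1 hs)
  · intro h
    by_cases hn : n ∈ S
    · exact Or.inl hn
    · exact Or.inr (exists_minGaps_leS hS E n h hn)

lemma minGaps_genIdeal {S X : Set ℕ} (hS : IsNumSgp S) (hX : X ⊆ Sᶜ)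
    (hanti : ∀ a ∈ X, ∀ b ∈ X, a ≠ b → ¬ leS S a b ∧ ¬ leS S b a) :
    minGaps S (genIdeal S X) = X := by
  have hsub : ∀ x ∈ X, x ∈ genIdeal S X := fun x hx =>
    mem_genIdeal.2 (Or.inr ⟨x, hx, leS_refl hS x⟩)
  ext n
  constructor
  · rintro ⟨hn, hnS, hmin⟩
    obtain ⟨x, hx, hxn⟩ := (mem_genIdeal.1 hn).resolve_left hnS
    exact hmin x (hsub x hx) (hX hx) hxn ▸ hx
  · intro hn
    refine ⟨hsub n hn, hX hn, fun y hy hyS hyn => ?_⟩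
    obtain ⟨x, hx, hxy⟩ := (mem_genIdeal.1 hy).resolve_left hyS
    -- `x ≤_S y ≤_S n` with `x, n ∈ X`, so `x = n`, and `y` is squeezed between them.
    have hxn : x = n := by
      by_contra hne
      exact (hanti x hx n hn hne).1 (leS_trans hS hxy hyn)
    obtain ⟨s, -, hs⟩ := hxy
    obtain ⟨t, -, ht⟩ := hyn
    omega

theorem stmt_3 (S : Set ℕ) (hS : IsNumSgp S) :
    (I0 S).ncard =
      {X : Set ℕ | X ⊆ Sᶜ ∧
        ∀ a ∈ X, ∀ b ∈ X, a ≠ b → ¬ leS S a b ∧ ¬ leS S b a}.ncard := by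
  refine Set.ncard_congr (fun E _ => minGaps S E) ?_ ?_ ?_
  · intro E _
    exact ⟨fun x hx => hx.2.1, fun a ha b hb hab =>
      ⟨fun h => hab (hb.2.2 a ha.1 ha.2.1 h), fun h => hab (ha.2.2 b hb.1 hb.2.1 h).symm⟩⟩
  · intro E F hE hF h
    rw [← genIdeal_minGaps hS hE, ← genIdeal_minGaps hS hF]
    exact congrArg (genIdeal S) h
  · rintro X ⟨hX, hanti⟩
    exact ⟨genIdeal S X, genIdeal_mem_I0 hS X, minGaps_genIdeal hS hX hanti⟩
end

section
/- Let S be a numerical semigroup with multiplicity m and Kunz coordinates (k_1, …, k_{m−1}). The map sending E ∈ I₀(S) to its Kunz coordinates (k_1(E), …, k_{m−1}(E)), where w_i(E) = k_i(E)·m + i, is a bijection from I₀(S) onto the set of tuples (x_1, …, x_{m−1}) of non-negative integers satisfying: x_i ≤ k_i for all i ∈ {1, …, m−1}; x_{i+j} ≤ x_i + k_j for all i, j ∈ {1, …, m−1} with i + j < m; and x_{i+j−m} ≤ x_i + k_j + 1 for all i, j ∈ {1, …, m−1} with i + j > m. -/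
/-!
An ideal `E` containing `0` is closed under adding `m ∈ S`, so in each residue class modulo `m` it
consists of all numbers from the least one on.  Hence `n ∈ E` if and only if
`kunzC m E (n % m) ≤ n / m` (`mem_iff_kunzC_le`).  This membership criterion gives injectivity
at once.  Applied to `k_i m + i ∈ S ⊆ E`, and to sums of `x_i m + i ∈ E` and `k_j m + j ∈ S`, it
gives the inequalities.  Conversely, for a tuple `x` satisfying them, the set
`{n | x (n % m) ≤ n / m}` is an ideal, and comparing its definition with the criterion shows that
its Kunz coordinates are `x`.
-/

open Set Pointwise

/-- The Kunz coordinates of an ideal `E` (with respect to multiplicity `m`),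
extended by `0` outside the index range `{1, …, m-1}`:
`kunzC m E i` is the `k_i(E)` with `wElt E m i = k_i(E) * m + i`. -/
noncomputable def kunzC (m : ℕ) (E : Set ℕ) : ℕ → ℕ :=
  fun i => if 1 ≤ i ∧ i < m then wElt E m i / m else 0

lemma mult_mem_and_pos {S : Set ℕ} (hS : IsNumSgp S) : mult S ∈ S ∧ 0 < mult S := by
  have hne : {n | n ∈ S ∧ n ≠ 0}.Nonempty := by
    obtain ⟨n, hn⟩ := (hS.2.2.union (Set.finite_singleton 0)).exists_notMem
    simp only [mem_union, mem_compl_iff, mem_singleton_iff, not_or, not_not] at hn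
    exact ⟨n, hn⟩
  have h := Nat.sInf_mem hne
  exact ⟨h.1, Nat.pos_of_ne_zero h.2⟩

lemma self_mem_I0 {S : Set ℕ} (hS : IsNumSgp S) : S ∈ I0 S := by
  refine ⟨hS.1, ?_⟩
  rintro _ ⟨a, ha, b, hb, rfl⟩
  exact hS.2.1 a ha b hb

lemma subset_of_mem_I0 {S E : Set ℕ} (hE : E ∈ I0 S) : S ⊆ E := fun s hs => by
  simpa using hE.2 (Set.add_mem_add hE.1 hs)

lemma add_mul_mem {S E : Set ℕ} (hE : E ∈ I0 S) {m : ℕ} (hm : m ∈ S) {e : ℕ} (he : e ∈ E)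
    (c : ℕ) : e + m * c ∈ E := by
  induction c with
  | zero => simpa using he
  | succ c ih =>
    rw [Nat.mul_succ, ← add_assoc]
    exact hE.2 (Set.add_mem_add ih hm)

/-- Some element of `E` is congruent to `i`, so the infimum in `wElt` is attained. -/
lemma wElt_mem {S E : Set ℕ} (hS : IsNumSgp S) (hE : E ∈ I0 S) {m : ℕ} (hm0 : 0 < m) (i : ℕ) :
    wElt E m i ∈ E ∧ wElt E m i % m = i % m := by
  have hne : {e | e ∈ E ∧ e % m = i % m}.Nonempty := by
    -- The progression `i + m * c` is infinite, so it leaves the finite complement of `S`.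
    have hinj : Function.Injective fun c : ℕ => i + m * c := fun a b h => by
      simpa [hm0.ne'] using h
    obtain ⟨c, hc⟩ := (hS.2.2.preimage hinj.injOn).exists_notMem
    refine ⟨i + m * c, subset_of_mem_I0 hE ?_, by simp⟩
    simpa using hc
  exact Nat.sInf_mem hne

/-- Membership in an ideal is read off from its Kunz coordinates. The residue class of `0` is
covered too, since `kunzC m E 0 = 0` by convention and `0 ∈ E`. -/
lemma mem_iff_kunzC_le {S E : Set ℕ} (hS : IsNumSgp S) (hE : E ∈ I0 S) {m : ℕ} (hm : m ∈ S)
    (hm0 : 0 < m) (n : ℕ) : n ∈ E ↔ kunzC m E (n % m) ≤ n / m := by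
  have hlt := Nat.mod_lt n hm0
  by_cases h0 : n % m = 0
  · refine iff_of_true ?_ (by simp [kunzC, h0])
    have h := add_mul_mem hE hm hE.1 (n / m)
    rwa [zero_add, Nat.mul_div_cancel' (Nat.dvd_of_mod_eq_zero h0)] at h
  · rw [kunzC, if_pos ⟨Nat.pos_of_ne_zero h0, hlt⟩]
    constructor
    · intro hn
      exact Nat.div_le_div_right (Nat.sInf_le ⟨hn, by simp⟩)
    · intro hle
      obtain ⟨h1, h2⟩ := wElt_mem hS hE hm0 (n % m)
      rw [Nat.mod_mod] at h2
      have h := add_mul_mem hE hm h1 (n / m - wElt E m (n % m) / m)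
      convert h using 1
      have e1 := Nat.mod_add_div n m
      have e2 := Nat.mod_add_div (wElt E m (n % m)) m
      obtain ⟨d, hd⟩ := Nat.exists_eq_add_of_le hle
      rw [hd, mul_add] at e1
      rw [hd, Nat.add_sub_cancel_left]
      omega

/-- The membership criterion in the coordinates `n = c * m + i`. -/
lemma mul_add_mem_iff {S E : Set ℕ} (hS : IsNumSgp S) (hE : E ∈ I0 S) {m : ℕ} (hm : m ∈ S)
    {i : ℕ} (hi : i < m) (c : ℕ) : c * m + i ∈ E ↔ kunzC m E i ≤ c := by
  have hm0 : 0 < m := by omega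
  rw [mem_iff_kunzC_le hS hE hm hm0, mul_comm, Nat.mul_add_mod, Nat.mod_eq_of_lt hi,
    Nat.mul_add_div hm0, Nat.div_eq_of_lt hi, add_zero]

theorem stmt_5 (S : Set ℕ) (hS : IsNumSgp S) (m : ℕ) (hm : m = mult S) :
    Set.BijOn (kunzC m) (I0 S)
      {x : ℕ → ℕ |
        (∀ i, ¬(1 ≤ i ∧ i < m) → x i = 0) ∧
        (∀ i, 1 ≤ i → i < m → x i ≤ kunzC m S i) ∧
        (∀ i j, 1 ≤ i → i < m → 1 ≤ j → j < m → i + j < m →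
          x (i + j) ≤ x i + kunzC m S j) ∧
        (∀ i j, 1 ≤ i → i < m → 1 ≤ j → j < m → m < i + j →
          x (i + j - m) ≤ x i + kunzC m S j + 1)} := by
  obtain ⟨hmS, hm0⟩ : m ∈ S ∧ 0 < m := hm ▸ mult_mem_and_pos hS
  have hSI := self_mem_I0 hS
  refine ⟨?_, ?_, ?_⟩
  · intro E hE
    have hsum : ∀ i j, i < m → j < m →
        (kunzC m E i * m + i) + (kunzC m S j * m + j) ∈ E := fun i j hi hj =>
      hE.2 (Set.add_mem_add ((mul_add_mem_iff hS hE hmS hi _).2 le_rfl)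
        ((mul_add_mem_iff hS hSI hmS hj _).2 le_rfl))
    refine ⟨fun i hi => if_neg hi, fun i _ hi => ?_, fun i j _ hi _ hj hij => ?_,
      fun i j _ hi _ hj hij => ?_⟩
    · rw [← mul_add_mem_iff hS hE hmS hi]
      exact subset_of_mem_I0 hE ((mul_add_mem_iff hS hSI hmS hi _).2 le_rfl)
    · rw [← mul_add_mem_iff hS hE hmS hij]
      convert hsum i j hi hj using 1
      ring
    · rw [← mul_add_mem_iff hS hE hmS (by omega)]
      convert hsum i j hi hj using 1
      rw [add_mul, add_mul]
      omega
  · intro E hE F hF h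
    ext n
    rw [mem_iff_kunzC_le hS hE hmS hm0, mem_iff_kunzC_le hS hF hmS hm0, h]
  · rintro x ⟨hx0, hxk, hx1, hx2⟩
    have hxz : x 0 = 0 := hx0 0 (by omega)
    have hE : {n | x (n % m) ≤ n / m} ∈ I0 S := by
      refine ⟨by simp [hxz], ?_⟩
      rintro _ ⟨a, ha, b, hb, rfl⟩
      rw [mem_iff_kunzC_le hS hSI hmS hm0] at hb
      simp only [mem_ofPred_eq] at ha ⊢
      have hi := Nat.mod_lt a hm0
      have hj := Nat.mod_lt b hm0
      rw [Nat.add_mod, Nat.add_div hm0]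
      generalize a % m = i at *
      generalize b % m = j at *
      -- The residues `i = 0`, `j = 0` and `i + j = m` are not covered by the subadditivity
      -- inequalities; for `i = 0` the bound `x j ≤ k_j` takes their place.
      rcases Nat.eq_zero_or_pos j with rfl | hj0
      · rw [add_zero, Nat.mod_eq_of_lt hi]
        omega
      rcases Nat.eq_zero_or_pos i with rfl | hi0
      · rw [zero_add, Nat.mod_eq_of_lt hj]
        have := hxk j hj0 hj
        omega
      rcases lt_trichotomy (i + j) m with h | h | h
      · have := hx1 i j hi0 hi hj0 hj h
        rw [Nat.mod_eq_of_lt h]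
        omega
      · rw [h, Nat.mod_self, hxz]
        exact Nat.zero_le _
      · have := hx2 i j hi0 hi hj0 hj h
        rw [Nat.mod_eq_sub_mod h.le, Nat.mod_eq_of_lt (by omega), if_pos h.le]
        omega
    refine ⟨_, hE, funext fun i => ?_⟩
    by_cases hi : 1 ≤ i ∧ i < m
    · refine eq_of_forall_ge_iff fun c => ?_
      rw [← mul_add_mem_iff hS hE hmS hi.2, mem_ofPred_eq, mul_comm, Nat.mul_add_mod, Nat.mod_eq_of_lt hi.2,
        Nat.mul_add_div hm0, Nat.div_eq_of_lt hi.2, add_zero]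
    · rw [hx0 i hi]
      exact if_neg hi
end

section
/- Let S be a numerical semigroup with multiplicity m, and let I, J ∈ I₀(S). Then for every i ∈ {0, …, m−1}, w_i(I + J) = min{ w_{i₁}(I) + w_{i₂}(J) : i₁, i₂ ∈ {0, …, m−1}, i₁ + i₂ ≡ i (mod m) }. -/
/-!
An element of `I + J` congruent to `i` is `a + b` with `a ∈ I` and `b ∈ J`; replacing `a` and `b`
by the least elements of `I` and `J` in their residue classes does not increase the sum and keeps
its residue. Conversely, each sum `w_{i₁}(I) + w_{i₂}(J)` with `i₁ + i₂ ≡ i` is itself an element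
of `I + J` in the class of `i`. Both directions need the infima defining `wElt` to be attained: `I`, `J`
and `I + J` are ideals, hence contain the cofinite set `S` and meet every residue class
(`wElt_spec`).
-/

open Set Pointwise

/-- Every ideal of `S` meets every residue class, so `wElt` is attained and is not the junk value
`sInf ∅ = 0`. -/
lemma wElt_spec {S E : Set ℕ} (hS : IsNumSgp S) (hE : E ∈ I0 S) {m : ℕ} (hm : 0 < m) (i : ℕ) :
    wElt E m i ∈ E ∧ wElt E m i % m = i % m := by
  have hne : {e | e ∈ E ∧ e % m = i % m}.Nonempty := by
    obtain ⟨B, hB⟩ := hS.2.2.bddAbove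
    refine ⟨i + m * (B + 1), ?_, by simp⟩
    have hmem : i + m * (B + 1) ∈ S := by
      by_contra h
      have h₁ : i + m * (B + 1) ≤ B := hB h
      have h₂ : 1 * (B + 1) ≤ m * (B + 1) := Nat.mul_le_mul_right _ hm
      omega
    simpa using hE.2 (Set.add_mem_add hE.1 hmem)
  exact Nat.sInf_mem hne

lemma wElt_le {E : Set ℕ} {m i e : ℕ} (he : e ∈ E) (h : e % m = i % m) : wElt E m i ≤ e :=
  Nat.sInf_le ⟨he, h⟩

theorem stmt_7 (S : Set ℕ) (hS : IsNumSgp S) (m : ℕ) (hm : m = mult S)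
    (I J : Set ℕ) (hI : I ∈ I0 S) (hJ : J ∈ I0 S) (i : ℕ) (hi : i < m) :
    wElt (I + J) m i =
      sInf {x | ∃ i₁ < m, ∃ i₂ < m,
        (i₁ + i₂) % m = i ∧ x = wElt I m i₁ + wElt J m i₂} := by
  have hm0 : 0 < m := by omega
  have hIJ : I + J ∈ I0 S := by
    refine ⟨by simpa using Set.add_mem_add hI.1 hJ.1, ?_⟩
    rw [add_assoc]
    exact Set.add_subset_add_left hJ.2
  apply le_antisymm
  · -- The index pair `(i, 0)` shows that the set of sums is nonempty.
    refine le_csInf ⟨_, i, hi, 0, hm0, by simpa using Nat.mod_eq_of_lt hi, rfl⟩ ?_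
    rintro x ⟨i₁, -, i₂, -, h, rfl⟩
    obtain ⟨hI₁, hI₂⟩ := wElt_spec hS hI hm0 i₁
    obtain ⟨hJ₁, hJ₂⟩ := wElt_spec hS hJ hm0 i₂
    refine wElt_le (Set.add_mem_add hI₁ hJ₁) ?_
    rw [Nat.add_mod, hI₂, hJ₂, ← Nat.add_mod, h, Nat.mod_eq_of_lt hi]
  · obtain ⟨hmem, hmod⟩ := wElt_spec hS hIJ hm0 i
    obtain ⟨a, ha, b, hb, hab⟩ := Set.mem_add.1 hmem
    rw [← hab, Nat.mod_eq_of_lt hi] at hmod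
    rw [← hab]
    refine le_trans (b := wElt I m (a % m) + wElt J m (b % m)) (Nat.sInf_le ?_)
      (add_le_add (wElt_le ha (by simp)) (wElt_le hb (by simp)))
    exact ⟨a % m, Nat.mod_lt _ hm0, b % m, Nat.mod_lt _ hm0, by rw [← Nat.add_mod, hmod], rfl⟩
end

section
/- Let S ≠ ℕ be a numerical semigroup with Frobenius number F(S). Then the standard canonical ideal of S satisfies K(S) = {F(S) − g : g ∈ PF(S)} + S. -/
/-! Every `x ∈ K(S)` has the form `F(S) - g + s` with `g` pseudo-Frobenius and `s ∈ S`.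
For `x > F(S)` take `g = F(S)` and `s = x`. For `x ≤ F(S)` the number `F(S) - x` is a gap; a
gap `g = F(S) - x + s` with `s ∈ S` as large as possible is pseudo-Frobenius, by maximality,
and `x = (F(S) - g) + s`. Conversely, if `y = F(S) - g + s ≤ F(S)`, then
`g = (F(S) - y) + s`, so `F(S) - y ∈ S` would force the gap `g` into `S`. -/

open Set Pointwise

/-- The standard canonical ideal of `S`:
`{x ∈ ℕ : x > F(S), or F(S) - x is a gap of S}`. -/
noncomputable def canonicalIdeal (S : Set ℕ) : Set ℕ :=
  {x | FrobN S < x ∨ FrobN S - x ∉ S}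

theorem stmt_9 (S : Set ℕ) (hS : IsNumSgp S) (hne : S ≠ Set.univ) :
    canonicalIdeal S = (fun g => FrobN S - g) '' PFset S + S := by
  obtain ⟨h0, hadd, hfin⟩ := hS
  have hle : ∀ g, g ∉ S → g ≤ FrobN S := fun g hg => le_csSup hfin.bddAbove hg
  have hF : FrobN S ∉ S := Nat.sSup_mem (Set.nonempty_compl.mpr hne) hfin.bddAbove
  have hbig : ∀ n, FrobN S < n → n ∈ S := by
    intro n hn
    by_contra h
    exact absurd (hle n h) (by omega)
  ext x
  simp only [canonicalIdeal, Set.mem_setOf_eq, Set.mem_add, Set.mem_image]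
  constructor
  · intro hx
    by_cases hlt : FrobN S < x
    · exact ⟨0, ⟨FrobN S, ⟨hF, fun s _ hs0 => hbig _ (by omega)⟩, by simp⟩,
        x, hbig x hlt, by simp⟩
    · have hgap : FrobN S - x ∉ S := hx.resolve_left hlt
      -- the elements of `S` that keep `F(S) - x` a gap; all of them are at most `x`
      have hTfin : {s | s ∈ S ∧ FrobN S - x + s ∉ S}.Finite := by
        refine (Set.finite_Iic x).subset fun s hs => ?_
        have := hle _ hs.2
        simp only [Set.mem_Iic]
        omega
      obtain ⟨s, ⟨hsS, hsgap⟩, hmax⟩ :=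
        Set.exists_max_image _ id hTfin ⟨0, h0, by simpa using hgap⟩
      have hsle := hle _ hsgap
      refine ⟨_, ⟨FrobN S - x + s, ⟨hsgap, fun t ht ht0 => ?_⟩, rfl⟩, s, hsS, by omega⟩
      by_contra hcon
      have := hmax (s + t) ⟨hadd s hsS t ht, by rwa [← add_assoc]⟩
      simp only [id] at this
      omega
  · rintro ⟨_, ⟨g, ⟨hg, -⟩, rfl⟩, s, hs, rfl⟩
    by_contra! hcon
    obtain ⟨hy, hmem⟩ := hcon
    have hgle := hle g hg
    have hsum := hadd _ hmem s hs
    rw [show FrobN S - (FrobN S - g + s) + s = g by omega] at hsum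
    exact hg hsum
end

section
/- Let S be a numerical semigroup and let g be a gap of S. Then the reduction number of the ideal {0, g} + S equals min{ k ∈ ℕ : (k+1)·g ∈ S }. -/
/-!
Write `E = {0, g} + S`. For `n ≥ 1` the `n`-fold sum `nE` consists of the numbers `j * g + s` with
`j ≤ n` and `s ∈ S` (`mem_nIdeal_iff`). Hence `(r + 1)E = rE` exactly when `(r + 1) * g = j * g + s`
for some `j ≤ r` and `s ∈ S`, that is, when `(k + 1) * g ∈ S` for some `k ≤ r`
(`stable_iff`, with `k = r - j`). So the exponents `r` at which the powers are stable form the upward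
closure of `{k | (k + 1) * g ∈ S}`, and a set of naturals and its upward closure have the same
infimum. The value `r = 0` is excluded on both sides because `g` is a gap.
-/

open Set Pointwise

/-- `nIdeal E n` is the `n`-fold sumset `E + ⋯ + E` (with `nIdeal E 0 = {0}`). -/
def nIdeal (E : Set ℕ) : ℕ → Set ℕ
  | 0 => {0}
  | n + 1 => nIdeal E n + E

/-- The reduction number of `E`: the least positive `r` with `(r+1)E = rE`. -/
noncomputable def redNum (E : Set ℕ) : ℕ :=
  sInf {r | 0 < r ∧ nIdeal E (r + 1) = nIdeal E r}

theorem mem_nIdeal_iff {S : Set ℕ} (hS : IsNumSgp S) (g : ℕ) {n : ℕ} (hn : 0 < n) (x : ℕ) :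
    x ∈ nIdeal (({0, g} : Set ℕ) + S) n ↔ ∃ j ≤ n, ∃ s ∈ S, x = j * g + s := by
  obtain ⟨h0, hadd, -⟩ := hS
  have hE : ∀ y, y ∈ ({0, g} : Set ℕ) + S ↔ ∃ j ≤ 1, ∃ s ∈ S, y = j * g + s := by
    intro y
    constructor
    · rintro ⟨a, (rfl | rfl), s, hs, rfl⟩
      · exact ⟨0, by omega, s, hs, by simp⟩
      · exact ⟨1, le_rfl, s, hs, by simp⟩
    · rintro ⟨j, hj, s, hs, rfl⟩
      interval_cases j
      · exact ⟨0, by simp, s, hs, by simp⟩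
      · exact ⟨g, by simp, s, hs, by simp⟩
  induction n, hn using Nat.le_induction generalizing x with
  | base => simpa [nIdeal] using hE x
  | succ n hn ih =>
    rw [nIdeal, Set.mem_add]
    constructor
    · rintro ⟨a, ha, b, hb, rfl⟩
      obtain ⟨i, hi, s, hs, rfl⟩ := (ih a).1 ha
      obtain ⟨j, hj, t, ht, rfl⟩ := (hE b).1 hb
      exact ⟨i + j, by omega, s + t, hadd s hs t ht, by ring⟩
    · rintro ⟨j, hj, s, hs, rfl⟩
      rcases Nat.lt_or_ge n j with h | h
      · obtain rfl : j = n + 1 := by omega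
        exact ⟨n * g + 0, (ih _).2 ⟨n, le_rfl, 0, h0, rfl⟩, 1 * g + s,
          (hE _).2 ⟨1, le_rfl, s, hs, rfl⟩, by ring⟩
      · exact ⟨j * g + s, (ih _).2 ⟨j, h, s, hs, rfl⟩, 0 * g + 0,
          (hE _).2 ⟨0, by omega, 0, h0, rfl⟩, by ring⟩

theorem stable_iff {S : Set ℕ} (hS : IsNumSgp S) {g : ℕ} (hg : g ∉ S) (r : ℕ) :
    (0 < r ∧ nIdeal (({0, g} : Set ℕ) + S) (r + 1) = nIdeal (({0, g} : Set ℕ) + S) r) ↔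
      ∃ k ≤ r, (k + 1) * g ∈ S := by
  constructor
  · rintro ⟨hr, h⟩
    have hmem : (r + 1) * g ∈ nIdeal (({0, g} : Set ℕ) + S) (r + 1) :=
      (mem_nIdeal_iff hS g r.succ_pos _).2 ⟨r + 1, le_rfl, 0, hS.1, rfl⟩
    rw [h, mem_nIdeal_iff hS g hr] at hmem
    obtain ⟨j, hj, s, hs, hjs⟩ := hmem
    obtain ⟨k, rfl⟩ := Nat.exists_eq_add_of_le hj
    obtain rfl : s = (k + 1) * g := by linarith
    exact ⟨k, by omega, hs⟩
  · rintro ⟨k, hk, hkS⟩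
    have hr : 0 < r := by
      rcases Nat.eq_zero_or_pos r with rfl | hr
      · obtain rfl : k = 0 := by omega
        simp [hg] at hkS
      · exact hr
    refine ⟨hr, ?_⟩
    ext x
    rw [mem_nIdeal_iff hS g r.succ_pos, mem_nIdeal_iff hS g hr]
    constructor
    · rintro ⟨j, hj, s, hs, rfl⟩
      rcases Nat.lt_or_ge r j with h | h
      · -- Trade `k + 1` of the `r + 1` copies of `g` for the element `(k + 1) * g` of `S`.
        obtain rfl : j = r + 1 := by omega
        obtain ⟨d, rfl⟩ := Nat.exists_eq_add_of_le hk
        exact ⟨d, by omega, (k + 1) * g + s, hS.2.1 _ hkS _ hs, by ring⟩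
      · exact ⟨j, h, s, hs, rfl⟩
    · rintro ⟨j, hj, s, hs, rfl⟩
      exact ⟨j, by omega, s, hs, rfl⟩

theorem stmt_10 (S : Set ℕ) (hS : IsNumSgp S) (g : ℕ) (hg : g ∉ S) :
    redNum (({0, g} : Set ℕ) + S) = sInf {k | (k + 1) * g ∈ S} := by
  unfold redNum
  simp only [stable_iff hS hg]
  rcases Set.eq_empty_or_nonempty {k | (k + 1) * g ∈ S} with h | h
  · -- This case does not arise, but both infima would have the default value `0`.
    have h' : ∀ k, (k + 1) * g ∉ S := fun k hk => (h ▸ hk : k ∈ (∅ : Set ℕ))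
    simp [h']
  · have hmem : (sInf {k | (k + 1) * g ∈ S} + 1) * g ∈ S := Nat.sInf_mem h
    apply le_antisymm
    · exact Nat.sInf_le ⟨_, le_rfl, hmem⟩
    · refine le_csInf ⟨_, _, le_rfl, hmem⟩ ?_
      rintro r ⟨k, hk, hkS⟩
      exact (Nat.sInf_le (show k ∈ {k | (k + 1) * g ∈ S} from hkS)).trans hk
end

section
/- Let S be a numerical semigroup with multiplicity m, let h ≥ 1, and let a_1, …, a_h be h pairwise distinct gaps of S with a_i ≤ m for every i. Then the reduction number of the ideal E = {0, a_1, …, a_h} + S satisfies r(E) ≤ m − h. -/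
/-! Write `E = A + S` with `A = {0, a₁, …, a_h}`, and let `r = m - h`. Since `m ∈ S` and the `aᵢ`
are gaps, `A` consists of `h + 1` distinct residues modulo `m`. Given a sum
`x = e₀ + ⋯ + e_r` of `r + 1` elements of `E`, consider the `r = m - h` partial sums `s_j` with
`2 ≤ j ≤ r + 1`. If some `s_j` is congruent modulo `m` to an element of `A`, then `s_j ∈ E`, so the
first `j` summands can be replaced by a single one. Otherwise the `s_j` occupy at most
`m - (h + 1)` residues, so two of them agree modulo `m`; the summands in between add up to a multiple
of `m`, which an earlier summand absorbs. Either way `x ∈ rE`, so `(r + 1)E = rE`. -/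

open Set Pointwise

lemma nIdeal_mono {E : Set ℕ} (h0 : 0 ∈ E) {n k : ℕ} (hnk : n ≤ k) :
    nIdeal E n ⊆ nIdeal E k := by
  induction hnk with
  | refl => exact subset_rfl
  | step _ ih => exact fun x hx => ⟨x, ih hx, 0, h0, rfl⟩

lemma add_mem_nIdeal {E : Set ℕ} {i j x y : ℕ} (hx : x ∈ nIdeal E i) (hy : y ∈ nIdeal E j) :
    x + y ∈ nIdeal E (i + j) := by
  induction j generalizing y with
  | zero =>
    obtain rfl : y = 0 := hy
    exact hx
  | succ j ih =>
    obtain ⟨u, hu, v, hv, rfl⟩ := hy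
    exact ⟨x + u, ih hu, v, hv, by simp [add_assoc]⟩

lemma mem_nIdeal_one {E : Set ℕ} {x : ℕ} (hx : x ∈ E) : x ∈ nIdeal E 1 :=
  ⟨0, rfl, x, hx, by simp⟩

lemma sum_range_mem_nIdeal {E : Set ℕ} {e : ℕ → ℕ} (he : ∀ i, e i ∈ E) (n : ℕ) :
    ∑ i ∈ Finset.range n, e i ∈ nIdeal E n := by
  induction n with
  | zero => rfl
  | succ n ih =>
    rw [Finset.sum_range_succ]
    exact ⟨_, ih, _, he n, rfl⟩

lemma exists_sum_of_mem_nIdeal {E : Set ℕ} (h0 : 0 ∈ E) {n x : ℕ} (hx : x ∈ nIdeal E n) :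
    ∃ e : ℕ → ℕ, (∀ i, e i ∈ E) ∧ x = ∑ i ∈ Finset.range n, e i := by
  induction n generalizing x with
  | zero => exact ⟨fun _ => 0, fun _ => h0, hx⟩
  | succ n ih =>
    obtain ⟨u, hu, v, hv, rfl⟩ := hx
    obtain ⟨e, he, rfl⟩ := ih hu
    refine ⟨fun i => if i < n then e i else v, fun i => ?_, ?_⟩
    · dsimp only
      split_ifs
      exacts [he i, hv]
    · rw [Finset.sum_range_succ]
      simp only [lt_irrefl, if_false]
      congr 1
      exact Finset.sum_congr rfl fun i hi => by simp [Finset.mem_range.1 hi]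

/-- Splitting a sum of `n` elements of `E` at its `j`-th partial sum. -/
lemma exists_tail {E : Set ℕ} {e : ℕ → ℕ} (he : ∀ i, e i ∈ E) {j n : ℕ} (hj : j ≤ n) :
    ∃ t ∈ nIdeal E (n - j),
      ∑ i ∈ Finset.range n, e i = ∑ i ∈ Finset.range j, e i + t := by
  refine ⟨_, sum_range_mem_nIdeal (e := fun i => e (j + i)) (fun i => he _) (n - j), ?_⟩
  rw [← Finset.sum_range_add, Nat.add_sub_cancel' hj]

lemma add_mem_nIdeal_of_absorb {E : Set ℕ} {c n x : ℕ} (hc : ∀ e ∈ E, e + c ∈ E) (hn : 1 ≤ n)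
    (hx : x ∈ nIdeal E n) : x + c ∈ nIdeal E n := by
  obtain ⟨k, rfl⟩ := Nat.exists_eq_add_of_le' hn
  obtain ⟨u, hu, v, hv, rfl⟩ := hx
  exact ⟨u, hu, v + c, hc v hv, by simp [add_assoc]⟩

/-- The pigeonhole argument: if `E` absorbs multiples of `m` and contains a set `A` of least
residues modulo `m`, then `(r + 1)E ⊆ rE` as soon as `r` exceeds the number of residues outside
`A`. -/
lemma nIdeal_succ_subset {E : Set ℕ} {m r : ℕ} (h0 : 0 ∈ E)
    (hmul : ∀ k, ∀ e ∈ E, e + m * k ∈ E) (A : Finset ℕ) (hAE : ∀ b ∈ A, b ∈ E)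
    (hAm : A ⊆ Finset.range m) (hm : 0 < m) (hr : m - A.card < r) :
    nIdeal E (r + 1) ⊆ nIdeal E r := by
  intro x hx
  obtain ⟨e, he, rfl⟩ := exists_sum_of_mem_nIdeal h0 hx
  set s : ℕ → ℕ := fun j => ∑ i ∈ Finset.range j, e i with hs
  have hmono : Monotone s := fun i j hij =>
    Finset.sum_le_sum_of_subset (Finset.range_mono hij)
  by_cases hcase : ∃ j ∈ Finset.Icc 2 (r + 1), s j % m ∈ A
  · obtain ⟨j, hj, hjA⟩ := hcase
    rw [Finset.mem_Icc] at hj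
    have hsE : s j ∈ E := by
      have := hmul (s j / m) _ (hAE _ hjA)
      rwa [Nat.mod_add_div] at this
    obtain ⟨t, ht, heq⟩ := exists_tail he hj.2
    rw [heq]
    exact nIdeal_mono h0 (by omega) (add_mem_nIdeal (mem_nIdeal_one hsE) ht)
  · push Not at hcase
    have hcard : (Finset.range m \ A).card < (Finset.Icc 2 (r + 1)).card := by
      rw [Finset.card_sdiff_of_subset hAm, Finset.card_range, Nat.card_Icc]
      omega
    obtain ⟨i, hi, j, hj, hne, hij⟩ :=
      Finset.exists_ne_map_eq_of_card_lt_of_maps_to hcard (f := fun j => s j % m)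
        (fun j hj => Finset.mem_coe.2 (Finset.mem_sdiff.2
          ⟨Finset.mem_range.2 (Nat.mod_lt _ hm), hcase j hj⟩))
    wlog hlt : i < j generalizing i j
    · exact this j hj i hi hne.symm hij.symm (by omega)
    rw [Finset.mem_Icc] at hi hj
    obtain ⟨k, hk⟩ := (Nat.modEq_iff_dvd' (hmono hlt.le)).1 hij
    have hsj : s j = s i + m * k := by
      have := hmono hlt.le
      omega
    obtain ⟨t, ht, heq⟩ := exists_tail he hj.2
    rw [heq]
    change s j + t ∈ _
    rw [hsj]
    exact nIdeal_mono h0 (by omega) (add_mem_nIdeal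
      (add_mem_nIdeal_of_absorb (hmul k) (by omega) (sum_range_mem_nIdeal he i)) ht)

theorem stmt_11 (S : Set ℕ) (hS : IsNumSgp S) (m : ℕ) (hm : m = mult S)
    (h : ℕ) (hh : 1 ≤ h) (a : Fin h → ℕ) (ha : Function.Injective a)
    (hgap : ∀ i, a i ∉ S) (hle : ∀ i, a i ≤ m) :
    redNum (insert 0 (Set.range a) + S) ≤ m - h := by
  obtain ⟨hS0, hSadd, hSfin⟩ := hS
  have hmem : m ∈ S ∧ m ≠ 0 := by
    -- `sInf ∅ = 0`, so a positive element of `S` is needed; `S` is cofinite, hence infinite.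
    have hne : {n | n ∈ S ∧ n ≠ 0}.Nonempty := by
      have hinf : S.Infinite := by
        simpa using hSfin.infinite_compl
      obtain ⟨n, hn, hpos⟩ := hinf.exists_gt 0
      exact ⟨n, hn, by omega⟩
    rw [hm]
    exact Nat.sInf_mem hne
  have hmS : ∀ k, m * k ∈ S := by
    intro k
    induction k with
    | zero => simpa using hS0
    | succ k ih => exact hSadd _ ih _ hmem.1
  have ha0 : ∀ i, a i ≠ 0 := fun i hi => hgap i (hi ▸ hS0)
  have halt : ∀ i, a i < m := fun i =>
    lt_of_le_of_ne (hle i) fun hi => hgap i (hi ▸ hmem.1)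
  set E : Set ℕ := insert 0 (Set.range a) + S with hE
  have h0 : 0 ∈ E := ⟨0, by simp, 0, hS0, rfl⟩
  set A : Finset ℕ := insert 0 (Finset.univ.image a) with hA
  have hAcard : A.card = h + 1 := by
    rw [hA, Finset.card_insert_of_notMem (by simpa using ha0),
      Finset.card_image_of_injective _ ha, Finset.card_univ, Fintype.card_fin]
  have hAm : A ⊆ Finset.range m := by
    intro b hb
    rw [Finset.mem_range]
    rcases Finset.mem_insert.1 hb with rfl | hb
    · exact Nat.pos_of_ne_zero hmem.2
    · obtain ⟨i, -, rfl⟩ := Finset.mem_image.1 hb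
      exact halt i
  have hAE : ∀ b ∈ A, b ∈ E := fun b hb =>
    ⟨b, by simpa [hA] using hb, 0, hS0, rfl⟩
  have hmul : ∀ k, ∀ e ∈ E, e + m * k ∈ E := by
    rintro k _ ⟨u, hu, v, hv, rfl⟩
    exact ⟨u, hu, v + m * k, hSadd _ hv _ (hmS k), by simp [add_assoc]⟩
  have hcard : h + 1 ≤ m := by
    simpa [hAcard] using Finset.card_le_card hAm
  refine Nat.sInf_le ⟨by omega, Subset.antisymm ?_ (nIdeal_mono h0 (Nat.le_succ _))⟩
  exact nIdeal_succ_subset h0 hmul A hAE hAm (Nat.pos_of_ne_zero hmem.2) (by omega)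
end

section
/- Let S be a numerical semigroup with genus g(S). The largest integer t for which there exists a strictly ascending chain I_0 ⊊ I_1 ⊊ ⋯ ⊊ I_t of ideals in I₀(S) is t = g(S); that is, every such chain has t ≤ g(S), and a chain of length g(S) exists. -/
/-!
Every ideal with minimum `0` contains `S`, so it is determined by the gaps it contains. Along a
strict chain the number of gaps contained grows by at least one at every step, which bounds the
length by the genus. For the bound to be attained, add the gaps to `S` one at a time from the
largest to the smallest: adding an element of `S` to an integer never moves it below the gaps
already added, so every intermediate set is an ideal. The number of gaps below `x` is `Nat.count`,
and the gap added at each step is provided by `Nat.nth`.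
-/

open Set Pointwise

/-- A strict chain of ideals picks up at least one new gap at every step. -/
lemma le_ncard_diff {S : Set ℕ} (hfin : Sᶜ.Finite) {t : ℕ} {I : ℕ → Set ℕ}
    (hI : ∀ k ≤ t, I k ∈ I0 S) (hlt : ∀ k < t, I k ⊂ I (k + 1)) :
    ∀ k ≤ t, k ≤ (I k \ S).ncard := by
  intro k
  induction k with
  | zero => simp
  | succ k ih =>
    intro hk
    have h := hlt k hk
    obtain ⟨x, hx, hxk⟩ := Set.exists_of_ssubset h
    have hxS : x ∉ S := fun hs => hxk (subset_of_mem_I0 (hI k (by omega)) hs)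
    have hss : I k \ S ⊂ I (k + 1) \ S :=
      ⟨Set.sdiff_subset_sdiff_left h.1, fun hc => hxk (hc ⟨hx, hxS⟩).1⟩
    have := Set.ncard_lt_ncard hss (hfin.subset fun y hy => hy.2)
    have := ih (by omega)
    omega

open Classical in
/-- `S` together with its `k` largest gaps (and all gaps if `genus S ≤ k`): a gap `x` belongs to
it when at least `genus S - k` gaps lie strictly below `x`. -/
noncomputable def addLargestGaps (S : Set ℕ) (k : ℕ) : Set ℕ :=
  S ∪ {x | genus S ≤ k + Nat.count (· ∉ S) x}

lemma addLargestGaps_mem_I0 {S : Set ℕ} (hS : IsNumSgp S) (k : ℕ) :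
    addLargestGaps S k ∈ I0 S := by
  classical
  refine ⟨Or.inl hS.1, ?_⟩
  rintro _ ⟨x, hx | hx, s, hs, rfl⟩
  · exact Or.inl (hS.2.1 x hx s hs)
  · refine Or.inr (le_trans hx (Nat.add_le_add_left ?_ k))
    exact Nat.count_monotone _ (Nat.le_add_right x s)

lemma addLargestGaps_ssubset {S : Set ℕ} {k : ℕ} (hk : k < genus S) :
    addLargestGaps S k ⊂ addLargestGaps S (k + 1) := by
  classical
  -- The gap with exactly `genus S - 1 - k` gaps below it is the one that separates the two sets.
  have hn : ∀ hf : {x | x ∉ S}.Finite, genus S - 1 - k < hf.toFinset.card := by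
    intro hf
    have : genus S = hf.toFinset.card := Set.ncard_eq_toFinset_card _ hf
    omega
  have hmem : Nat.nth (· ∉ S) (genus S - 1 - k) ∉ S := Nat.nth_mem _ hn
  have hcount : Nat.count (· ∉ S) (Nat.nth (· ∉ S) (genus S - 1 - k)) = genus S - 1 - k :=
    Nat.count_nth hn
  refine ⟨?_, fun hc => ?_⟩
  · rintro x (hx | hx)
    · exact Or.inl hx
    · refine Or.inr ?_
      simp only [Set.mem_ofPred_eq] at hx ⊢
      omega
  · have hin : Nat.nth (· ∉ S) (genus S - 1 - k) ∈ addLargestGaps S (k + 1) := by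
      refine Or.inr ?_
      simp only [Set.mem_ofPred_eq, hcount]
      omega
    rcases hc hin with h | h
    · exact hmem h
    · simp only [Set.mem_ofPred_eq, hcount] at h
      omega

theorem stmt_13 (S : Set ℕ) (hS : IsNumSgp S) :
    (∀ (t : ℕ) (I : ℕ → Set ℕ),
      (∀ k ≤ t, I k ∈ I0 S) → (∀ k < t, I k ⊂ I (k + 1)) → t ≤ genus S) ∧
    (∃ I : ℕ → Set ℕ,
      (∀ k ≤ genus S, I k ∈ I0 S) ∧ ∀ k < genus S, I k ⊂ I (k + 1)) := by
  refine ⟨fun t I hI hlt => ?_, addLargestGaps S, fun k _ => addLargestGaps_mem_I0 hS k,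
    fun k hk => addLargestGaps_ssubset hk⟩
  exact (le_ncard_diff hS.2.2 hI hlt t le_rfl).trans
    (Set.ncard_le_ncard (fun y hy => hy.2) hS.2.2)
end

section
/- Let S be a numerical semigroup and let g be a gap of S. Then the ideal {0, g} + S is irreducible in I₀(S): for all J, K ∈ I₀(S) with J ≠ S and K ≠ S, if J + K = {0, g} + S then J = {0, g} + S or K = {0, g} + S. -/
/-! Since `0` lies in both `J` and `K`, both are contained in `J + K = {0, g} + S`, so whichever
contains `g` equals `{0, g} + S`. Write `g = j + k` with `j ∈ J` and `k ∈ K`. If `j = 0` or `k = 0`,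
then `g` lies in `K` or in `J`. Otherwise `j` and `k` are smaller than `g`, and the elements of
`{0, g} + S` below `g` lie in `S`; hence `g = j + k ∈ S`, contradicting that `g` is a gap. -/

open Set Pointwise

/-- A member of `{0, g} + S` below `g` already lies in `S`. -/
lemma mem_of_mem_pair_add_of_lt {S : Set ℕ} {g x : ℕ} (hx : x ∈ ({0, g} : Set ℕ) + S)
    (hlt : x < g) : x ∈ S := by
  obtain ⟨a, ha, s, hs, rfl⟩ := Set.mem_add.1 hx
  rcases ha with rfl | rfl
  · simpa using hs
  · omega

/-- An ideal with minimum 0 that contains `g` contains `{0, g} + S`. -/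
lemma eq_pair_add_of_mem {S J : Set ℕ} {g : ℕ} (hJ : J ∈ I0 S)
    (hsub : J ⊆ ({0, g} : Set ℕ) + S) (hgJ : g ∈ J) : J = ({0, g} : Set ℕ) + S := by
  refine hsub.antisymm (Subset.trans (Set.add_subset_add_right ?_) hJ.2)
  rintro x (rfl | rfl)
  exacts [hJ.1, hgJ]

theorem stmt_15 (S : Set ℕ) (hS : IsNumSgp S) (g : ℕ) (hg : g ∉ S) :
    ∀ J ∈ I0 S, ∀ K ∈ I0 S, J ≠ S → K ≠ S →
      J + K = ({0, g} : Set ℕ) + S →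
        J = ({0, g} : Set ℕ) + S ∨ K = ({0, g} : Set ℕ) + S := by
  intro J hJ K hK _ _ h
  have hJs : J ⊆ ({0, g} : Set ℕ) + S := fun x hx =>
    h ▸ Set.mem_add.2 ⟨x, hx, 0, hK.1, add_zero x⟩
  have hKs : K ⊆ ({0, g} : Set ℕ) + S := fun x hx =>
    h ▸ Set.mem_add.2 ⟨0, hJ.1, x, hx, zero_add x⟩
  have hgm : g ∈ J + K := by
    rw [h]
    exact Set.mem_add.2 ⟨g, by simp, 0, hS.1, add_zero g⟩
  obtain ⟨j, hj, k, hk, hjk⟩ := Set.mem_add.1 hgm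
  rcases Nat.eq_zero_or_pos j with rfl | hj0
  · rw [zero_add] at hjk
    exact Or.inr (eq_pair_add_of_mem hK hKs (hjk ▸ hk))
  rcases Nat.eq_zero_or_pos k with rfl | hk0
  · rw [add_zero] at hjk
    exact Or.inl (eq_pair_add_of_mem hJ hJs (hjk ▸ hj))
  have hjS := mem_of_mem_pair_add_of_lt (hJs hj) (by omega)
  have hkS := mem_of_mem_pair_add_of_lt (hKs hk) (by omega)
  exact absurd (hjk ▸ hS.2.1 j hjS k hkS) hg
end

section
/- Let S be a numerical semigroup and Q ∈ I₀(S). Then Q is an idempotent quark of I₀(S) (i.e., Q is a quark and Q + Q = Q) if and only if Q = {0, f} + S for some f ∈ SG(S), where SG(S) = {f ∈ PF(S) : 2f ∈ S} is the set of special gaps of S. -/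
/-!
For a pseudo-Frobenius number `f` the ideal `{0, f} + S` is just `S ∪ {f}` (`pair_add_eq_insert`).
No ideal lies strictly between `S` and `S ∪ {f}`, and any summand of an ideal with minimum `0` is
contained in it, so `S ∪ {f}` is a quark; it is idempotent because `f + f ∈ S`.

Conversely, let `Q` be an idempotent quark and let `f` be the largest element of the finite nonempty
set `Q \ S`. Elements of `Q` larger than `f` lie in `S`, so `f` is pseudo-Frobenius and `f + f ∈ S`.
Then `I = {0, f} + S` satisfies `I ⊆ Q`, hence `Q ⊆ I + Q ⊆ Q + Q = Q`, so `I` is a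
summand of `Q` different from `S`, and the quark property forces `I = Q`.
-/

open Set Pointwise

/-- A quark of `I₀(S)`: a non-identity element `Q` such that there is no
`I ∈ I₀(S)` with `I ≠ S`, `I ≠ Q` and `Q = I + K` for some `K ∈ I₀(S)`. -/
def IsQuark (S Q : Set ℕ) : Prop :=
  Q ∈ I0 S ∧ Q ≠ S ∧
    ¬ ∃ I ∈ I0 S, I ≠ S ∧ I ≠ Q ∧ ∃ K ∈ I0 S, Q = I + K

lemma pair_add_eq_insert {S : Set ℕ} (hS : IsNumSgp S) {f : ℕ} (hf : f ∈ PFset S) :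
    ({0, f} : Set ℕ) + S = insert f S := by
  ext x
  simp only [Set.mem_add, Set.mem_insert_iff, Set.mem_singleton_iff]
  constructor
  · rintro ⟨a, rfl | rfl, s, hs, rfl⟩
    · right; simpa using hs
    · by_cases h : s = 0
      · left; simp [h]
      · right; exact hf.2 s hs h
  · rintro (rfl | hx)
    · exact ⟨x, Or.inr rfl, 0, hS.1, rfl⟩
    · exact ⟨0, Or.inl rfl, x, hx, zero_add x⟩

lemma insert_mem_I0 {S : Set ℕ} (hS : IsNumSgp S) {f : ℕ} (hf : f ∈ PFset S) :
    insert f S ∈ I0 S := by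
  refine ⟨Or.inr hS.1, ?_⟩
  rw [← pair_add_eq_insert hS hf, add_assoc]
  refine Set.add_subset_add_left ?_
  rintro _ ⟨a, ha, b, hb, rfl⟩
  exact hS.2.1 a ha b hb

theorem stmt_16 (S : Set ℕ) (hS : IsNumSgp S) (Q : Set ℕ) (hQ : Q ∈ I0 S) :
    (IsQuark S Q ∧ Q + Q = Q) ↔
      ∃ f, f ∈ PFset S ∧ f + f ∈ S ∧ Q = ({0, f} : Set ℕ) + S := by
  have hSQ := subset_of_mem_I0 hQ
  constructor
  · rintro ⟨⟨-, hne, hq⟩, hid⟩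
    have hfin : (Q \ S).Finite := hS.2.2.subset fun x hx => hx.2
    have hnonempty : (Q \ S).Nonempty := by
      rw [Set.sdiff_nonempty]
      exact fun h => hne (h.antisymm hSQ)
    obtain ⟨f, ⟨hfQ, hfS⟩, hmax⟩ := Set.exists_max_image (Q \ S) id hfin hnonempty
    have hbig : ∀ x ∈ Q, f < x → x ∈ S := fun x hx hlt => by
      by_contra hxS
      exact absurd (hmax x ⟨hx, hxS⟩) (not_le.2 hlt)
    have hf0 : f ≠ 0 := fun h => hfS (h ▸ hS.1)
    have hPF : f ∈ PFset S :=
      ⟨hfS, fun s hs h0 => hbig _ (hQ.2 (Set.add_mem_add hfQ hs)) (by omega)⟩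
    refine ⟨f, hPF, hbig _ (hid ▸ Set.add_mem_add hfQ hfQ) (by omega), ?_⟩
    rw [pair_add_eq_insert hS hPF]
    by_contra hcon
    refine hq ⟨insert f S, insert_mem_I0 hS hPF, ?_, fun h => hcon h.symm, Q, hQ, ?_⟩
    · exact fun h => hfS (h ▸ Set.mem_insert f S)
    · apply Set.Subset.antisymm
      · exact fun x hx => Set.mem_add.2 ⟨0, Or.inr hS.1, x, hx, zero_add x⟩
      · calc insert f S + Q ⊆ Q + Q :=
              Set.add_subset_add_right (Set.insert_subset hfQ hSQ)
          _ = Q := hid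
  · rintro ⟨f, hPF, hff, hQf⟩
    rw [pair_add_eq_insert hS hPF] at hQf
    subst hQf
    refine ⟨⟨hQ, fun h => hPF.1 (h ▸ Set.mem_insert f S), ?_⟩, ?_⟩
    · rintro ⟨I, hI, hIS, hIQ, K, hK, hIK⟩
      have hSI := subset_of_mem_I0 hI
      have hsub : I ⊆ insert f S := by
        rw [hIK]
        exact fun x hx => Set.mem_add.2 ⟨x, hx, 0, hK.1, add_zero x⟩
      by_cases hfI : f ∈ I
      · exact hIQ (hsub.antisymm (Set.insert_subset hfI hSI))
      · exact hIS (((Set.subset_insert_iff_of_notMem hfI).1 hsub).antisymm hSI)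
    · apply Set.Subset.antisymm
      · rintro _ ⟨a, ha, b, hb, rfl⟩
        rcases hb with rfl | hb
        · rcases ha with rfl | ha
          · exact Or.inr hff
          · change a + b ∈ _
            rw [add_comm]
            exact hQ.2 (Set.add_mem_add (Set.mem_insert b S) ha)
        · exact hQ.2 (Set.add_mem_add ha hb)
      · exact fun x hx => Set.mem_add.2 ⟨0, hQ.1, x, hx, zero_add x⟩
end

section
/- Let S ≠ ℕ be a numerical semigroup with Frobenius number F(S). Then S is pseudo-symmetric if and only if there exists h ∈ ℕ with 2h = F(S) and the set of quarks of I₀(S) is exactly {{0, F(S)} + S, {0, h} + S}. -/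
/-!
Write `F = FrobN S`. For a pseudo-Frobenius number `f` one has `{0, f} + S = S ∪ {f}`, which
covers `S` in the inclusion order of `I₀(S)`; since summands are contained in their sum,
`S ∪ {f}` is a quark (`isQuark_insert`).

If `S` is pseudo-symmetric with `2h = F`, then `h` and `F` are pseudo-Frobenius, which gives two
quarks. Any other ideal `Q ≠ S` contains a gap `x ≠ h`, hence contains `x + (F - x) = F`, and then
`Q = (S ∪ {F}) + Q` shows that `Q` is not a quark (`eq_of_isQuark_of_frob_mem`).

Conversely, if the quarks are `{0, F} + S` and `{0, h} + S`, then `PF(S) ⊆ {F, h}`. Every gap `x`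
lies below some `f ∈ PF(S)` with `f - x ∈ S` (`exists_add_mem_PFset`). For `f = F` this is the
claim; for `f = h ≠ x` it gives `F - x = h + (h - x) ∈ S`.
-/

open Set Pointwise

/-- `S` is pseudo-symmetric: `F(S)` is even and `F(S) - x ∈ S` for every gap
`x ≠ F(S)/2` of `S`. -/
noncomputable def IsPseudoSymm (S : Set ℕ) : Prop :=
  ∃ h : ℕ, 2 * h = FrobN S ∧ ∀ x : ℕ, x ∉ S → x ≠ h → FrobN S - x ∈ S

lemma le_frobN {S : Set ℕ} (hS : IsNumSgp S) {x : ℕ} (hx : x ∉ S) : x ≤ FrobN S :=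
  le_csSup hS.2.2.bddAbove hx

lemma mem_of_frobN_lt {S : Set ℕ} (hS : IsNumSgp S) {x : ℕ} (hx : FrobN S < x) : x ∈ S := by
  by_contra h
  exact absurd (le_frobN hS h) (by omega)

lemma frobN_mem_PFset {S : Set ℕ} (hS : IsNumSgp S) (hne : S ≠ Set.univ) :
    FrobN S ∈ PFset S :=
  ⟨Nat.sSup_mem (Set.nonempty_compl.2 hne) hS.2.2.bddAbove,
    fun s _ h0 => mem_of_frobN_lt hS (by omega)⟩

lemma insert_ne_self {S : Set ℕ} {f : ℕ} (hf : f ∈ PFset S) : insert f S ≠ S := fun h =>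
  hf.1 (h ▸ Set.mem_insert f S)

lemma isQuark_insert {S : Set ℕ} (hS : IsNumSgp S) {f : ℕ} (hf : f ∈ PFset S) :
    IsQuark S (insert f S) := by
  refine ⟨insert_mem_I0 hS hf, insert_ne_self hf, ?_⟩
  rintro ⟨I, hI, hIS, hIQ, K, hK, hQ⟩
  have hSI := subset_of_mem_I0 hI
  have hIsub : I ⊆ insert f S := fun i hi => hQ ▸ ⟨i, hi, 0, hK.1, add_zero i⟩
  by_cases hfI : f ∈ I
  · exact hIQ (hIsub.antisymm (Set.insert_subset hfI hSI))
  · refine hIS (Set.Subset.antisymm (fun i hi => ?_) hSI)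
    rcases hIsub hi with rfl | h
    · exact absurd hi hfI
    · exact h

lemma insert_frobN_add {S : Set ℕ} (hS : IsNumSgp S) {Q : Set ℕ} (hQ : Q ∈ I0 S)
    (hF : FrobN S ∈ Q) : Q = insert (FrobN S) S + Q := by
  refine Set.Subset.antisymm (fun q hq => ⟨0, Or.inr hS.1, q, hq, zero_add q⟩) ?_
  rintro _ ⟨a, ha, q, hq, rfl⟩
  rcases ha with rfl | ha
  · rcases eq_or_ne q 0 with rfl | h0
    · simpa using hF
    · exact subset_of_mem_I0 hQ (mem_of_frobN_lt hS (by dsimp only; omega))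
  · exact hQ.2 ⟨q, hq, a, ha, add_comm q a⟩

/-- `S ∪ {F(S)}` acts as an identity on the ideals containing `F(S)`, so it is the only quark
among them. -/
lemma eq_of_isQuark_of_frob_mem {S : Set ℕ} (hS : IsNumSgp S) (hne : S ≠ Set.univ) {Q : Set ℕ}
    (hQ : IsQuark S Q) (hF : FrobN S ∈ Q) : Q = insert (FrobN S) S := by
  have hPF := frobN_mem_PFset hS hne
  by_contra h
  exact hQ.2.2 ⟨_, insert_mem_I0 hS hPF, insert_ne_self hPF, Ne.symm h, Q, hQ.1,
    insert_frobN_add hS hQ.1 hF⟩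

/-- Every gap lies below a pseudo-Frobenius number in the order induced by `S`. -/
lemma exists_add_mem_PFset {S : Set ℕ} (hS : IsNumSgp S) (x : ℕ) (hx : x ∉ S) :
    ∃ s ∈ S, x + s ∈ PFset S := by
  by_cases h : ∀ s ∈ S, s ≠ 0 → x + s ∈ S
  · exact ⟨0, hS.1, hx, h⟩
  · push Not at h
    obtain ⟨s, hs, h0, hxs⟩ := h
    have hle := le_frobN hS hxs
    obtain ⟨t, ht, hpf⟩ := exists_add_mem_PFset hS (x + s) hxs
    exact ⟨s + t, hS.2.1 s hs t ht, by rwa [← add_assoc]⟩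
termination_by FrobN S - x

lemma half_mem_PFset {S : Set ℕ} (hS : IsNumSgp S) (hne : S ≠ Set.univ) {h : ℕ}
    (hh : 2 * h = FrobN S) (hsym : ∀ x : ℕ, x ∉ S → x ≠ h → FrobN S - x ∈ S) :
    h ∈ PFset S := by
  have hgap : h ∉ S := fun hm => (frobN_mem_PFset hS hne).1 (by
    rw [← hh, two_mul]
    exact hS.2.1 h hm h hm)
  refine ⟨hgap, fun s hs h0 => ?_⟩
  by_contra hc
  have hle := le_frobN hS hc
  have hm := hS.2.1 _ (hsym (h + s) hc (by omega)) s hs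
  exact hgap (by rwa [show FrobN S - (h + s) + s = h by omega] at hm)

theorem stmt_18 (S : Set ℕ) (hS : IsNumSgp S) (hne : S ≠ Set.univ) :
    IsPseudoSymm S ↔
      ∃ h : ℕ, 2 * h = FrobN S ∧
        {Q | IsQuark S Q} =
          {({0, FrobN S} : Set ℕ) + S, ({0, h} : Set ℕ) + S} := by
  have hPF := frobN_mem_PFset hS hne
  constructor
  · rintro ⟨h, hh, hsym⟩
    refine ⟨h, hh, ?_⟩
    have hhPF := half_mem_PFset hS hne hh hsym
    rw [pair_add_eq_insert hS hPF, pair_add_eq_insert hS hhPF]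
    ext Q
    constructor
    · intro hQ
      by_cases hF : FrobN S ∈ Q
      · exact Or.inl (eq_of_isQuark_of_frob_mem hS hne hQ hF)
      · right
        have hSQ := subset_of_mem_I0 hQ.1
        have hsub : Q ⊆ insert h S := by
          intro x hx
          by_contra hc
          have hxS : x ∉ S := fun hm => hc (Or.inr hm)
          have hle := le_frobN hS hxS
          exact hF (hQ.1.2 ⟨x, hx, _, hsym x hxS (fun e => hc (Or.inl e)),
            Nat.add_sub_cancel' hle⟩)
        refine hsub.antisymm (Set.insert_subset ?_ hSQ)
        by_contra hhQ
        refine hQ.2.1 (Set.Subset.antisymm (fun x hx => ?_) hSQ)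
        rcases hsub hx with rfl | hm
        · exact absurd hx hhQ
        · exact hm
    · rintro (rfl | rfl)
      · exact isQuark_insert hS hPF
      · exact isQuark_insert hS hhPF
  · rintro ⟨h, hh, hq⟩
    have hgap : h ∉ S := fun hm => hPF.1 (by
      rw [← hh, two_mul]
      exact hS.2.1 h hm h hm)
    have key : ∀ f ∈ PFset S, f = FrobN S ∨ f = h := by
      intro f hf
      have hmem : insert f S ∈ {Q | IsQuark S Q} := isQuark_insert hS hf
      rw [hq, pair_add_eq_insert hS hPF] at hmem
      rcases hmem with e | e
      · left
        exact (e ▸ Set.mem_insert f S : f ∈ insert (FrobN S) S).resolve_right hf.1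
      · right
        have hm : h ∈ insert f S := by
          rw [e]
          exact ⟨h, by simp, 0, hS.1, by simp⟩
        exact (hm.resolve_right hgap).symm
    refine ⟨h, hh, fun x hx hxh => ?_⟩
    obtain ⟨s, hs, hf⟩ := exists_add_mem_PFset hS x hx
    rcases key _ hf with e | e
    · rwa [show FrobN S - x = s by omega]
    · rw [show FrobN S - x = x + s + s by omega]
      exact hf.2 s hs (by omega)
end
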